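/- arXiv:2009.08175 — 2 statements merged into one kernel-verified Lean document; each statement's English description precedes it below -/
import Mathlib

section
/- Let A be a nonempty closed convex subset of ℝ^k, let λ > 0, and let G₁, G₂ : ℝ^k → ℝ be differentiable functions such that G₁ satisfies the λ-gap inequality on A. If â₁ ∈ A minimizes G₁ over A and â₂ ∈ A minimizes G₂ over A, then 2λ‖â₁ − â₂‖ ≤ ‖∇G₁(â₂) − ∇G₂(â₂)‖. -/
open scoped RealInnerProductSpace

theorem first_order_aux {k : ℕ} (A : Set (EuclideanSpace ℝ (Fin k))) (hAconv : Convex ℝ A)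
    (G : EuclideanSpace ℝ (Fin k) → ℝ) (hG : Differentiable ℝ G)
    (x y : EuclideanSpace ℝ (Fin k)) (hx : x ∈ A) (hy : y ∈ A)
    (hmin : ∀ a ∈ A, G x ≤ G a) : 0 ≤ ⟪gradient G x, y - x⟫ := by
  have hm : IsMinOn G A x := fun a ha => hmin a ha
  have h := hm.localize.hasFDerivWithinAt_nonneg
    ((hG x).hasGradientAt.hasFDerivAt.hasFDerivWithinAt)
    (sub_mem_posTangentConeAt_of_segment_subset (hAconv.segment_subset hx hy))
  simpa using h

theorem gradient_stability_of_constrained_minimizers {k : ℕ}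
    (A : Set (EuclideanSpace ℝ (Fin k)))
    (hA : A.Nonempty) (hAclosed : IsClosed A) (hAconv : Convex ℝ A)
    (lam : ℝ) (hlam : 0 < lam)
    (G₁ G₂ : EuclideanSpace ℝ (Fin k) → ℝ)
    (hG₁ : Differentiable ℝ G₁) (hG₂ : Differentiable ℝ G₂)
    (hGap : ∀ a ∈ A, ∀ b ∈ A,
      lam * ‖b - a‖ ^ 2 ≤ G₁ b - G₁ a - ⟪gradient G₁ a, b - a⟫)
    (ahat₁ ahat₂ : EuclideanSpace ℝ (Fin k)) (hahat₁A : ahat₁ ∈ A) (hahat₂A : ahat₂ ∈ A)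
    (hmin₁ : ∀ a ∈ A, G₁ ahat₁ ≤ G₁ a) (hmin₂ : ∀ a ∈ A, G₂ ahat₂ ≤ G₂ a) :
    2 * lam * ‖ahat₁ - ahat₂‖ ≤ ‖gradient G₁ ahat₂ - gradient G₂ ahat₂‖ := by
  have h1 := first_order_aux A hAconv G₁ hG₁ ahat₁ ahat₂ hahat₁A hahat₂A hmin₁
  have h2 := first_order_aux A hAconv G₂ hG₂ ahat₂ ahat₁ hahat₂A hahat₁A hmin₂
  have g1 := hGap ahat₁ hahat₁A ahat₂ hahat₂A
  have g2 := hGap ahat₂ hahat₂A ahat₁ hahat₁A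
  have hc := real_inner_le_norm (gradient G₂ ahat₂ - gradient G₁ ahat₂) (ahat₁ - ahat₂)
  rw [inner_sub_left, norm_sub_rev (gradient G₂ ahat₂)] at hc
  rw [norm_sub_rev ahat₂ ahat₁] at g1
  rcases (norm_nonneg (ahat₁ - ahat₂)).eq_or_lt with h0 | hpos
  · rw [← h0, mul_zero]
    exact norm_nonneg _
  · refine le_of_mul_le_mul_right ?_ hpos
    nlinarith
end

section
/- Let A be a nonempty closed convex subset of ℝ^k, let λ > 0, K ≥ 0 and T > 0, and let G : [0,T] × ℝ^k → ℝ be such that for every t ∈ [0,T] the function G(t, ·) is differentiable and satisfies the λ-gap inequality on A. Let â : [0,T] → A be such that â(t) minimizes G(t, ·) over A for each t. If ‖∇ₐG(t, a) − ∇ₐG(s, a)‖ ≤ K(1 + ‖a‖)·|t − s|^{1/2} for all s, t ∈ [0,T] and all a ∈ A, then ‖â(t) − â(s)‖ ≤ (2λ)⁻¹ K (1 + ‖â(s)‖)·|t − s|^{1/2} for all s, t ∈ [0,T]. -/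
open scoped RealInnerProductSpace

theorem holder_time_regularity_of_constrained_minimizer {k : ℕ}
    (A : Set (EuclideanSpace ℝ (Fin k)))
    (hA : A.Nonempty) (hAclosed : IsClosed A) (hAconv : Convex ℝ A)
    (lam K T : ℝ) (hlam : 0 < lam) (hK : 0 ≤ K) (hT : 0 < T)
    (G : ℝ → EuclideanSpace ℝ (Fin k) → ℝ)
    (hdiff : ∀ t ∈ Set.Icc (0 : ℝ) T, Differentiable ℝ (G t))
    (hGap : ∀ t ∈ Set.Icc (0 : ℝ) T, ∀ a ∈ A, ∀ b ∈ A,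
      lam * ‖b - a‖ ^ 2 ≤ G t b - G t a - ⟪gradient (G t) a, b - a⟫)
    (ahat : ℝ → EuclideanSpace ℝ (Fin k))
    (hmem : ∀ t ∈ Set.Icc (0 : ℝ) T, ahat t ∈ A)
    (hmin : ∀ t ∈ Set.Icc (0 : ℝ) T, ∀ a ∈ A, G t (ahat t) ≤ G t a)
    (hHolder : ∀ s ∈ Set.Icc (0 : ℝ) T, ∀ t ∈ Set.Icc (0 : ℝ) T, ∀ a ∈ A,
      ‖gradient (G t) a - gradient (G s) a‖ ≤ K * (1 + ‖a‖) * Real.sqrt |t - s|) :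
    ∀ s ∈ Set.Icc (0 : ℝ) T, ∀ t ∈ Set.Icc (0 : ℝ) T,
      ‖ahat t - ahat s‖ ≤ (2 * lam)⁻¹ * K * (1 + ‖ahat s‖) * Real.sqrt |t - s| := by
  have foc : ∀ t ∈ Set.Icc (0 : ℝ) T, ∀ b ∈ A,
      0 ≤ ⟪gradient (G t) (ahat t), b - ahat t⟫ := by
    intro t ht b hb
    have h1 : IsLocalMinOn (G t) A (ahat t) :=
      IsMinOn.localize (fun a ha => hmin t ht a ha)
    have h2 := ((hdiff t ht) (ahat t)).hasGradientAt.hasFDerivAt.hasFDerivWithinAt (s := A)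
    have h3 := h1.hasFDerivWithinAt_nonneg h2
      (sub_mem_posTangentConeAt_of_segment_subset (hAconv.segment_subset (hmem t ht) hb))
    simpa using h3
  intro s hs t ht
  have e1 := hGap t ht _ (hmem s hs) _ (hmem t ht)
  have e2 := hGap t ht _ (hmem t ht) _ (hmem s hs)
  have f1 := foc t ht _ (hmem s hs)
  have f2 := foc s hs _ (hmem t ht)
  have hH := hHolder s hs t ht _ (hmem s hs)
  have c := real_inner_le_norm (gradient (G s) (ahat s) - gradient (G t) (ahat s))
    (ahat t - ahat s)
  rw [inner_sub_left, norm_sub_rev] at c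
  rw [norm_sub_rev (ahat s)] at e2
  have hm := mul_le_mul_of_nonneg_right hH (norm_nonneg (ahat t - ahat s))
  have key : 2 * lam * ‖ahat t - ahat s‖ ^ 2 ≤
      K * (1 + ‖ahat s‖) * Real.sqrt |t - s| * ‖ahat t - ahat s‖ := by
    linarith
  have key2 : 2 * lam * ‖ahat t - ahat s‖ ≤ K * (1 + ‖ahat s‖) * Real.sqrt |t - s| := by
    rcases (norm_nonneg (ahat t - ahat s)).eq_or_lt with h | h
    · rw [← h, mul_zero]
      positivity
    · refine le_of_mul_le_mul_right ?_ h
      linarith [key, sq ‖ahat t - ahat s‖, mul_assoc (2 * lam) ‖ahat t - ahat s‖ ‖ahat t - ahat s‖,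
        congrArg (2 * lam * ·) (sq ‖ahat t - ahat s‖)]
  rw [mul_assoc, mul_assoc, ← mul_assoc K, le_inv_mul_iff₀ (by positivity)]
  exact key2
end
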